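/- Let U : (0,∞) → ℝ be measurable with ∫₀^∞ U(s)² (s + s²) ds < ∞, and let u(x) := U(|x|) for x ∈ ℝ³. Define V(x) := −∫_{ℝ³} u(y)² |x−y|^{-1} dy. Then V is radial, V(x) = v(|x|) for a function v that is differentiable on (0,∞), and for every r > 0: v(r) + r v'(r) = −4π ∫_r^∞ U(s)² s ds. In particular v(r) + r v'(r) ≤ 0 for all r > 0. -/

import Mathlib

open MeasureTheory Filter

noncomputable section

/-- `ℝ³` with the Euclidean norm. -/
abbrev E3 : Type := EuclideanSpace ℝ (Fin 3)

/-- Radial integration in the plane, shifted: the substitution `s = √(ρ² + z²)`. -/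
lemma newton_radial_subst (z : ℝ) (F : ℝ → ENNReal) :
    ∫⁻ ρ in Set.Ioi (0:ℝ), ENNReal.ofReal ρ * F (Real.sqrt (z^2 + ρ^2)) =
      ∫⁻ s in Set.Ioi |z|, ENNReal.ofReal s * F s := by
  have himg : (fun ρ : ℝ => Real.sqrt (z^2 + ρ^2)) '' Set.Ioi 0 = Set.Ioi |z| := by
    ext s
    simp only [Set.mem_image, Set.mem_Ioi]
    constructor
    · rintro ⟨ρ, hρ, rfl⟩
      apply Real.lt_sqrt_of_sq_lt
      rw [sq_abs]; nlinarith
    · intro hs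
      have hs0 : 0 < s := lt_of_le_of_lt (abs_nonneg z) hs
      have h2 : z^2 < s^2 := by
        rw [← sq_abs z]; nlinarith [abs_nonneg z]
      refine ⟨Real.sqrt (s^2 - z^2), Real.sqrt_pos.2 (by linarith), ?_⟩
      rw [Real.sq_sqrt (by linarith)]
      rw [show z^2 + (s^2 - z^2) = s^2 by ring, Real.sqrt_sq hs0.le]
  have hpos : ∀ ρ : ℝ, 0 < ρ → 0 < z^2 + ρ^2 := fun ρ h => by positivity
  rw [← himg, lintegral_image_eq_lintegral_abs_deriv_mul
    (f' := fun ρ => ρ / Real.sqrt (z^2 + ρ^2)) measurableSet_Ioi]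
  · refine setLIntegral_congr_fun measurableSet_Ioi fun ρ hρ => ?_
    have hq := Real.sqrt_pos.2 (hpos ρ hρ)
    rw [← mul_assoc, ← ENNReal.ofReal_mul (abs_nonneg _),
      abs_of_nonneg (div_nonneg (le_of_lt hρ) hq.le), div_mul_cancel₀ _ hq.ne']
  · intro ρ hρ
    have h1 : HasDerivAt (fun ρ : ℝ => z^2 + ρ^2) (2 * ρ) ρ := by
      simpa using (hasDerivAt_pow 2 ρ).const_add (z^2)
    have h2 := h1.sqrt (hpos ρ hρ).ne'
    refine (h2.congr_deriv ?_).hasDerivWithinAt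
    rw [mul_div_mul_left _ _ two_ne_zero]
  · intro a ha b hb hab
    simp only [Set.mem_Ioi] at ha hb
    have := (Real.sqrt_inj (hpos a ha).le (hpos b hb).le).1 hab
    exact (pow_left_inj₀ ha.le hb.le two_ne_zero).1 (by linarith)

/-- Integration in polar coordinates of a function of the radius. -/
lemma newton_polar (G : ℝ → ENNReal) (hG : Measurable G) :
    ∫⁻ p : ℝ × ℝ, G (p.1^2 + p.2^2) =
      ENNReal.ofReal (2 * Real.pi) * ∫⁻ ρ in Set.Ioi (0:ℝ), ENNReal.ofReal ρ * G (ρ^2) := by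
  rw [← lintegral_comp_polarCoord_symm]
  have : ∀ p : ℝ × ℝ, ENNReal.ofReal p.1 • G ((polarCoord.symm p).1^2 + (polarCoord.symm p).2^2)
      = (fun q : ℝ × ℝ => ENNReal.ofReal q.1 * G (q.1^2)) p := by
    intro p
    simp only [polarCoord_symm_apply, smul_eq_mul]
    congr 2
    have := Real.sin_sq_add_cos_sq p.2
    linear_combination p.1^2 * this
  simp_rw [this]
  rw [show polarCoord.target = Set.Ioi (0 : ℝ) ×ˢ Set.Ioo (-Real.pi) Real.pi from rfl,
    Measure.volume_eq_prod, setLIntegral_prod _ (by fun_prop)]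
  simp only [lintegral_const, Measure.restrict_apply MeasurableSet.univ, Set.univ_inter,
    Real.volume_Ioo]
  rw [lintegral_mul_const _ (by fun_prop), mul_comm]
  congr 2; ring

/-- Integral of a function of `‖y‖` and `y 0`. -/
lemma newton_axial (F : ℝ × ℝ → ENNReal) (hF : Measurable F) :
    ∫⁻ y : E3, F (‖y‖, y 0) =
      ENNReal.ofReal (2 * Real.pi) *
        ∫⁻ z : ℝ, ∫⁻ s in Set.Ioi |z|, ENNReal.ofReal s * F (s, z) := by
  have e1 := PiLp.volume_preserving_toLp (Fin 3)
  have e2 := (volume_preserving_piFinSuccAbove (fun _ : Fin 3 => ℝ) 0).symm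
  have e3 : MeasurePreserving (Prod.map id (MeasurableEquiv.finTwoArrow (α := ℝ)).symm)
      (volume : Measure (ℝ × ℝ × ℝ)) volume :=
    (MeasurePreserving.id volume).prod (volume_preserving_finTwoArrow ℝ).symm
  have hm : Measurable (fun y : E3 => F (‖y‖, y 0)) := by fun_prop
  have e := (e1.comp e2).comp e3
  rw [← e.lintegral_comp hm]
  have hval : ∀ p : ℝ × ℝ × ℝ,
      F (‖((WithLp.toLp 2 ∘ (MeasurableEquiv.piFinSuccAbove (fun _ : Fin 3 => ℝ) 0).symm) ∘
        Prod.map id (MeasurableEquiv.finTwoArrow (α := ℝ)).symm) p‖,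
        ((WithLp.toLp 2 ∘ (MeasurableEquiv.piFinSuccAbove (fun _ : Fin 3 => ℝ) 0).symm) ∘
        Prod.map id (MeasurableEquiv.finTwoArrow (α := ℝ)).symm) p 0) =
      F (Real.sqrt (p.1^2 + (p.2.1^2 + p.2.2^2)), p.1) := by
    rintro ⟨a, b, c⟩
    congr 2
    rw [EuclideanSpace.norm_eq]
    congr 1
    simp [Fin.sum_univ_three]
    ring
  rw [lintegral_congr hval, Measure.volume_eq_prod, lintegral_prod _ (by fun_prop),
    ← lintegral_const_mul' _ _ ENNReal.ofReal_ne_top]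
  · refine lintegral_congr fun z => ?_
    have := newton_polar (fun t => F (Real.sqrt (z^2 + t), z)) (by fun_prop)
    rw [this, newton_radial_subst z (fun s => F (s, z))]

/-- The angular integral. -/
lemma newton_angular (r s : ℝ) (hr : 0 < r) (hs : 0 < s) :
    ∫⁻ z in Set.Ioo (-s) s, ENNReal.ofReal (1 / Real.sqrt (r^2 - 2*r*z + s^2)) =
      ENNReal.ofReal (2 * s / max r s) := by
  have hpos : ∀ z ∈ Set.Ioo (-s) s, 0 < r^2 - 2*r*z + s^2 := by
    intro z hz
    nlinarith [sq_nonneg (r - s), mul_pos hr (sub_pos.2 hz.2)]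
  set g : ℝ → ℝ := fun z => -(1/r) * Real.sqrt (r^2 - 2*r*z + s^2) with hg
  have hcont : ContinuousOn g (Set.Icc (-s) s) := by fun_prop
  have hder : ∀ z ∈ Set.Ioo (-s) s, HasDerivAt g (1 / Real.sqrt (r^2 - 2*r*z + s^2)) z := by
    intro z hz
    have h1 : HasDerivAt (fun z : ℝ => r^2 - 2*r*z + s^2) (-(2*r)) z := by
      simpa using (((hasDerivAt_id z).const_mul (2*r)).const_sub (r^2)).add_const (s^2)
    have h2 := (h1.sqrt (hpos z hz).ne').const_mul (-(1/r))
    refine h2.congr_deriv ?_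
    have := Real.sqrt_pos.2 (hpos z hz)
    field_simp
  have hnn : ∀ z ∈ Set.Ioo (-s) s, 0 ≤ 1 / Real.sqrt (r^2 - 2*r*z + s^2) :=
    fun z _ => by positivity
  have hint := intervalIntegral.integrableOn_deriv_of_nonneg hcont hder hnn
  have hle : -s ≤ s := by linarith
  have hI := intervalIntegral.integral_eq_sub_of_hasDerivAt_of_le hle hcont hder
    ((intervalIntegrable_iff_integrableOn_Ioc_of_le hle).2 hint)
  rw [setLIntegral_congr Ioo_ae_eq_Ioc, ← ofReal_integral_eq_lintegral_ofReal hint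
    (ae_of_all _ fun z => by positivity), ← intervalIntegral.integral_of_le hle, hI]
  congr 1
  simp only [hg]
  rw [show r^2 - 2*r*s + s^2 = (r-s)^2 by ring, show r^2 - 2*r*(-s) + s^2 = (r+s)^2 by ring,
    Real.sqrt_sq_eq_abs, Real.sqrt_sq (by positivity)]
  rcases le_total r s with h | h
  · rw [max_eq_right h, abs_of_nonpos (by linarith)]
    field_simp
    ring
  · rw [max_eq_left h, abs_of_nonneg (by linarith)]
    field_simp
    ring

lemma newton_lintegral_axis (f : ℝ → ℝ) (hf : Measurable f) (hf0 : ∀ s, 0 ≤ f s) (r : ℝ)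
    (hr : 0 < r) (e : E3) (he : e = EuclideanSpace.single 0 r) :
    ∫⁻ y : E3, ENNReal.ofReal (f ‖y‖ / ‖e - y‖) =
      ∫⁻ s in Set.Ioi (0:ℝ), ENNReal.ofReal (4 * Real.pi / r * (f s * s * min r s)) := by
  have hn : ∀ y : E3, ‖e - y‖ = Real.sqrt (r^2 - 2*r*(y 0) + ‖y‖^2) := by
    intro y
    rw [← Real.sqrt_sq (norm_nonneg (e - y)), norm_sub_sq_real, he]
    congr 1
    simp [abs_of_pos hr, EuclideanSpace.inner_single_left]
    ring
  simp_rw [hn]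
  set F : ℝ × ℝ → ENNReal :=
    fun p => ENNReal.ofReal (f p.1 / Real.sqrt (r^2 - 2*r*p.2 + p.1^2)) with hF
  have hFm : Measurable F := by fun_prop
  rw [show (∫⁻ y : E3, ENNReal.ofReal (f ‖y‖ / Real.sqrt (r^2 - 2*r*(y 0) + ‖y‖^2))) =
    ∫⁻ y : E3, F (‖y‖, y 0) from rfl, newton_axial F hFm]
  have hind : ∀ z : ℝ, ∫⁻ s in Set.Ioi |z|, ENNReal.ofReal s * F (s, z) =
      ∫⁻ s, {p : ℝ × ℝ | |p.1| < p.2}.indicator (fun p => ENNReal.ofReal p.2 * F (p.2, p.1)) (z, s) := by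
    intro z
    rw [← lintegral_indicator measurableSet_Ioi]
    rfl
  have hset : MeasurableSet {p : ℝ × ℝ | |p.1| < p.2} :=
    measurableSet_lt (by fun_prop) (by fun_prop)
  simp_rw [hind]
  rw [lintegral_lintegral_swap]
  swap
  · exact (Measurable.indicator (by fun_prop) hset).aemeasurable
  rw [← lintegral_const_mul _ ((Measurable.indicator (by fun_prop) hset).lintegral_prod_left'),
    ← lintegral_indicator measurableSet_Ioi]
  refine lintegral_congr fun s => ?_
  by_cases hs : 0 < s
  · rw [Set.indicator_of_mem (show s ∈ Set.Ioi 0 from hs)]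
    have h1 : ∀ z : ℝ, {p : ℝ × ℝ | |p.1| < p.2}.indicator
        (fun p => ENNReal.ofReal p.2 * F (p.2, p.1)) (z, s) =
        (Set.Ioo (-s) s).indicator (fun z => ENNReal.ofReal (s * f s) *
          ENNReal.ofReal (1 / Real.sqrt (r^2 - 2*r*z + s^2))) z := by
      intro z
      by_cases hz : |z| < s
      · rw [Set.indicator_of_mem (show (z, s) ∈ {p : ℝ × ℝ | |p.1| < p.2} from hz),
          Set.indicator_of_mem (show z ∈ Set.Ioo (-s) s from abs_lt.1 hz)]
        simp only [hF]
        rw [← ENNReal.ofReal_mul hs.le, ← ENNReal.ofReal_mul (mul_nonneg hs.le (hf0 s))]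
        congr 1; ring
      · rw [Set.indicator_of_notMem (show (z, s) ∉ {p : ℝ × ℝ | |p.1| < p.2} from hz),
          Set.indicator_of_notMem (show z ∉ Set.Ioo (-s) s from fun h => hz (abs_lt.2 h))]
    simp_rw [h1]
    rw [lintegral_indicator measurableSet_Ioo, lintegral_const_mul _ (by fun_prop),
      newton_angular r s hr hs, ← ENNReal.ofReal_mul (mul_nonneg hs.le (hf0 s)),
      ← ENNReal.ofReal_mul (by positivity)]
    congr 1
    have hmm : min r s * max r s = r * s := min_mul_max r s
    have hm : 0 < max r s := lt_max_of_lt_left hr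
    field_simp
    linear_combination (-4 * f s) * hmm
  · rw [Set.indicator_of_notMem (show s ∉ Set.Ioi 0 from hs)]
    have h1 : ∀ z : ℝ, {p : ℝ × ℝ | |p.1| < p.2}.indicator
        (fun p => ENNReal.ofReal p.2 * F (p.2, p.1)) (z, s) = 0 := by
      intro z
      apply Set.indicator_of_notMem
      intro h
      exact hs (lt_of_le_of_lt (abs_nonneg z) h)
    simp_rw [h1]
    simp

/-- Newton's theorem. -/
lemma newton_integral (f : ℝ → ℝ) (hf : Measurable f) (hf0 : ∀ s, 0 ≤ f s) (x : E3)
    (hx : x ≠ 0) :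
    ∫ y : E3, f ‖y‖ / ‖x - y‖ =
      4 * Real.pi / ‖x‖ * ∫ s in Set.Ioi (0:ℝ), f s * s * min ‖x‖ s := by
  have hr : 0 < ‖x‖ := norm_pos_iff.2 hx
  set e : E3 := EuclideanSpace.single 0 ‖x‖ with he
  have hxe : ‖e‖ = ‖x‖ := by simp [he]
  have hT := Submodule.reflection_sub hxe
  set T := Submodule.reflection (Submodule.span ℝ {e - x})ᗮ with hTdef
  have hrot : ∫ y : E3, f ‖y‖ / ‖x - y‖ = ∫ y : E3, f ‖y‖ / ‖e - y‖ := by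
    rw [← T.measurePreserving.integral_comp T.toHomeomorph.measurableEmbedding
      (fun y : E3 => f ‖y‖ / ‖x - y‖)]
    refine integral_congr_ae (ae_of_all _ fun y => ?_)
    simp only
    rw [T.norm_map, ← hT, ← map_sub, T.norm_map]
  rw [hrot, integral_eq_lintegral_of_nonneg_ae
      (ae_of_all _ fun y => div_nonneg (hf0 _) (norm_nonneg _))
      (Measurable.aestronglyMeasurable (by fun_prop)),
    newton_lintegral_axis f hf hf0 ‖x‖ hr e he, ← integral_const_mul,
    integral_eq_lintegral_of_nonneg_ae _ (by fun_prop)]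
  filter_upwards [ae_restrict_mem measurableSet_Ioi] with s hs
  have hs' : 0 < s := hs
  have := hf0 s
  have : 0 ≤ min ‖x‖ s := le_min hr.le hs'.le
  have := Real.pi_pos
  simp only [Pi.zero_apply]
  positivity

/-- The differentiation step. -/
lemma newton_deriv (f : ℝ → ℝ) (hf : Measurable f) (hf0 : ∀ s, 0 ≤ f s)
    (hint : IntegrableOn (fun s => f s * s) (Set.Ioi 0)) (r : ℝ) (hr : 0 < r) :
    HasDerivAt (fun t : ℝ => ∫ s in Set.Ioi (0:ℝ), f s * s * min t s)
      (∫ s in Set.Ioi r, f s * s) r := by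
  have hcut : ∫ s in Set.Ioi r, f s * s =
      ∫ s in Set.Ioi (0:ℝ), (Set.Ioi r).indicator (fun s => f s * s) s := by
    rw [setIntegral_indicator measurableSet_Ioi, Set.inter_eq_self_of_subset_right
      (Set.Ioi_subset_Ioi hr.le)]
  rw [hcut]
  refine (hasDerivAt_integral_of_dominated_loc_of_lip (bound := fun s => f s * s) (s := Set.univ)
    Filter.univ_mem ?_ ?_ ?_ ?_ hint ?_).2
  · exact Eventually.of_forall fun t => by fun_prop
  · refine Integrable.mono' (hint.mul_const r) (by fun_prop) ?_
    filter_upwards [ae_restrict_mem measurableSet_Ioi] with s hs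
    have hs' : 0 < s := hs
    have h0 : 0 ≤ min r s := le_min hr.le hs'.le
    have h1 := mul_nonneg (hf0 s) hs'.le
    rw [Real.norm_of_nonneg (mul_nonneg h1 h0)]
    exact mul_le_mul_of_nonneg_left (min_le_left _ _) h1
  · exact (Measurable.indicator (by fun_prop) measurableSet_Ioi).aestronglyMeasurable
  · refine ae_of_all _ fun s => LipschitzOnWith.of_dist_le_mul fun a _ b _ => ?_
    simp only [Real.dist_eq, Real.coe_nnabs]
    rw [← mul_sub, abs_mul]
    refine mul_le_mul_of_nonneg_left ?_ (abs_nonneg _)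
    simpa using abs_min_sub_min_le_max a s b s
  · have hne : ∀ᵐ s ∂(volume.restrict (Set.Ioi (0:ℝ))), s ≠ r :=
      ae_restrict_of_ae (by simp [ae_iff])
    filter_upwards [hne] with s hs
    rcases lt_or_gt_of_ne hs with h | h
    · rw [Set.indicator_of_notMem (by simpa using h.le)]
      refine (hasDerivAt_const r (f s * s * s)).congr_of_eventuallyEq ?_
      filter_upwards [lt_mem_nhds h] with t ht
      rw [min_eq_right ht.le]
    · rw [Set.indicator_of_mem (by simpa using h)]
      have : HasDerivAt (fun t : ℝ => f s * s * t) (f s * s) r := by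
        simpa using (hasDerivAt_id r).const_mul (f s * s)
      refine this.congr_of_eventuallyEq ?_
      filter_upwards [gt_mem_nhds h] with t ht
      rw [min_eq_left ht.le]

/-- Newton's theorem computation in the proof of Proposition 1.5.
For radial `u(x) = U(|x|)` with `∫₀^∞ U(s)² (s+s²) ds < ∞`, the Newtonian potential
`V = -(u² ∗ |x|⁻¹)` is radial, `V(x) = v(|x|)` with `v` differentiable on `(0,∞)`, and
`v(r) + r v'(r) = -4π ∫_r^∞ U(s)² s ds ≤ 0` for every `r > 0`. -/
theorem newton_virial_identity
    (U : ℝ → ℝ) (hUmeas : Measurable U)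
    (hUint : IntegrableOn (fun s : ℝ => (U s)^2 * (s + s^2)) (Set.Ioi (0:ℝ)))
    (u : E3 → ℝ) (hu : ∀ x : E3, u x = U ‖x‖)
    (V : E3 → ℝ) (hV : ∀ x : E3, V x = -∫ y : E3, (u y)^2 / ‖x - y‖) :
    ∃ v v' : ℝ → ℝ,
      (∀ x : E3, V x = v ‖x‖) ∧
      ∀ r : ℝ, 0 < r →
        HasDerivAt v (v' r) r ∧
        v r + r * v' r = -(4 * Real.pi) * ∫ s in Set.Ioi r, (U s)^2 * s ∧
        v r + r * v' r ≤ 0 := by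
  have hint : IntegrableOn (fun s => (U s)^2 * s) (Set.Ioi 0) := by
    refine Integrable.mono' hUint (by fun_prop) ?_
    filter_upwards [ae_restrict_mem measurableSet_Ioi] with s hs
    have hs' : 0 < s := hs
    rw [Real.norm_of_nonneg (by positivity)]
    exact mul_le_mul_of_nonneg_left (by nlinarith) (sq_nonneg _)
  set W : ℝ → ℝ := fun t => ∫ s in Set.Ioi (0:ℝ), (U s)^2 * s * min t s with hW
  set D : ℝ → ℝ := fun r => ∫ s in Set.Ioi r, (U s)^2 * s with hD
  refine ⟨fun r => if r = 0 then V 0 else -(4 * Real.pi) * (W r / r),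
    fun r => -(4 * Real.pi) * ((D r * r - W r * 1) / r^2), ?_, ?_⟩
  · intro x
    by_cases hx : x = 0
    · simp [hx]
    · simp only [norm_eq_zero, hx, if_false]
      rw [hV]
      simp_rw [hu]
      rw [newton_integral (fun s => (U s)^2) (by fun_prop) (fun s => sq_nonneg _) x hx]
      simp only [hW]
      ring
  · intro r hr
    have hWd : HasDerivAt W (D r) r :=
      newton_deriv (fun s => (U s)^2) (by fun_prop) (fun s => sq_nonneg _) hint r hr
    have heq : (if r = 0 then V 0 else -(4 * Real.pi) * (W r / r)) +
        r * (-(4 * Real.pi) * ((D r * r - W r * 1) / r^2)) = -(4 * Real.pi) * D r := by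
      rw [if_neg hr.ne']
      field_simp
      ring
    refine ⟨?_, heq, ?_⟩
    · refine ((hWd.div (hasDerivAt_id r) hr.ne').const_mul (-(4 * Real.pi))).congr_of_eventuallyEq ?_
      filter_upwards [lt_mem_nhds hr] with t ht
      simp [ht.ne']
    · simp only
      rw [heq]
      have hDn : 0 ≤ D r := setIntegral_nonneg measurableSet_Ioi fun s hs => by
        have : 0 < s := lt_trans hr hs
        positivity
      have := Real.pi_pos
      nlinarith [mul_nonneg this.le hDn]
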